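/- arXiv:1403.3678 — 3 statements merged into one kernel-verified Lean document; each statement's English description precedes it below -/
import Mathlib

section
/- Let μ be a symmetric probability measure on ℝ and K > 0. Then the Wasserstein distance between μ and its symmetric saturation satisfies d(μ, ⌊μ⌋_K^s) = ∫₀¹ |F_μ(t) − F_{⌊μ⌋_K^s}(t)| dt ≤ 1 − tanh(K/2). -/
open MeasureTheory Real

/-- A probability measure on ℝ is *symmetric* if the pushforward under negation
equals the measure with density `x ↦ e^{-x}` with respect to it. -/
def IsSymmetricMeasure (μ : Measure ℝ) : Prop :=
  μ.map (fun x => -x) = μ.withDensity (fun x => ENNReal.ofReal (Real.exp (-x)))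

/-- The `|D|`-distribution of a probability measure `ν` on ℝ:
`F_ν(t) = ν({x : |tanh(x/2)| ≤ t})`, as a real number. -/
noncomputable def absDdist (ν : Measure ℝ) (t : ℝ) : ℝ :=
  (ν {x : ℝ | |Real.tanh (x / 2)| ≤ t}).toReal

/-- The Wasserstein distance between two probability measures on ℝ:
the `L¹` distance between their `|D|`-distributions on `[0,1]`. -/
noncomputable def wassersteinDist (μ ν : Measure ℝ) : ℝ :=
  ∫ t in (0:ℝ)..1, |absDdist μ t - absDdist ν t|

/-- The symmetrically saturated measure `⌊μ⌋_K^s`. -/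
noncomputable def symSat (μ : Measure ℝ) (K : ℝ) : Measure ℝ :=
  μ.restrict (Set.Ioo (-K) K)
    + (μ {x : ℝ | K ≤ |x|} * ENNReal.ofReal (Real.exp (-K) / (1 + Real.exp (-K))))
        • Measure.dirac (-K)
    + (μ {x : ℝ | K ≤ |x|} * ENNReal.ofReal (1 - Real.exp (-K) / (1 + Real.exp (-K))))
        • Measure.dirac K

/-!
Saturation leaves `μ` unchanged on the open interval `(-K, K)` and preserves the total mass. Hence
`|F_μ - F_{⌊μ⌋_K^s}|` never exceeds the mass `γ` that is moved, and it vanishes below `tanh (K / 2)`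
because `|tanh (x / 2)| < tanh (K / 2)` forces `|x| < K`. Integrating over `[tanh (K / 2), 1]` gives
`γ * (1 - tanh (K / 2))`.
-/

theorem tanh_strictMono : StrictMono tanh := fun a b hab =>
  (artanh_lt_artanh_iff (tanh_bijOn.mapsTo trivial) (tanh_bijOn.mapsTo trivial)).mp <| by
    rwa [artanh_tanh, artanh_tanh]

theorem abs_tanh (x : ℝ) : |tanh x| = tanh |x| := by
  rw [tanh_eq_sinh_div_cosh, tanh_eq_sinh_div_cosh, abs_div, abs_sinh, cosh_abs,
    abs_of_pos (cosh_pos x)]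

theorem abs_tanh_lt_tanh_iff {x y : ℝ} : |tanh x| < tanh y ↔ |x| < y := by
  rw [abs_tanh, tanh_strictMono.lt_iff_lt]

theorem setOf_abs_tanh_half_le_subset_Ioo {K t : ℝ} (ht : t < tanh (K / 2)) :
    {x : ℝ | |tanh (x / 2)| ≤ t} ⊆ Set.Ioo (-K) K := by
  intro x hx
  have h_half : |x / 2| < K / 2 := abs_tanh_lt_tanh_iff.mp (lt_of_le_of_lt hx ht)
  rw [abs_div, abs_two, div_lt_div_iff_of_pos_right two_pos] at h_half
  exact abs_lt.mp h_half

theorem norm_intervalIntegral_le_of_eqOn_zero {E : Type*} [NormedAddCommGroup E] [NormedSpace ℝ E]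
    {f : ℝ → E} {a b T C : ℝ} (hab : a ≤ b) (hTb : T ≤ b) (hzero : Set.EqOn f 0 (Set.Ioo a T))
    (hbound : ∀ t ∈ Set.Icc T b, ‖f t‖ ≤ C) :
    ‖∫ t in a..b, f t‖ ≤ C * (b - T) := by
  have hC : 0 ≤ C := (norm_nonneg _).trans (hbound b (Set.right_mem_Icc.mpr hTb))
  have h_subset : Set.Ioc a b ∩ Set.Icc T b ⊆ Set.Icc T b := Set.inter_subset_right
  calc ‖∫ t in a..b, f t‖
      = ‖∫ t in Set.Ioc a b ∩ Set.Icc T b, f t‖ := by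
        rw [intervalIntegral.integral_of_le hab]
        congr 1
        refine setIntegral_eq_of_subset_of_forall_sdiff_eq_zero measurableSet_Ioc
          Set.inter_subset_left fun t ⟨ht, ht'⟩ => hzero ⟨ht.1, ?_⟩
        exact not_le.mp fun hTt => ht' ⟨ht, hTt, ht.2⟩
    _ ≤ C * volume.real (Set.Ioc a b ∩ Set.Icc T b) :=
        norm_setIntegral_le_of_norm_le_const
          ((measure_mono h_subset).trans_lt measure_Icc_lt_top) fun t ht => hbound t ht.2
    _ ≤ C * volume.real (Set.Icc T b) := by
        gcongr
        exact measure_Icc_lt_top.ne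
    _ = C * (b - T) := by rw [Real.volume_real_Icc_of_le hTb]

section RestrictEq

variable {α : Type*} [MeasurableSpace α] {μ ν : Measure α} {s U : Set α}

theorem measure_eq_of_restrict_eq_of_subset (h : μ.restrict U = ν.restrict U) (hs : s ⊆ U) :
    μ s = ν s := by
  rw [← Measure.restrict_eq_self μ hs, h, Measure.restrict_eq_self ν hs]

theorem measureReal_compl_eq_of_restrict_eq [IsFiniteMeasure μ]
    (hU : MeasurableSet U) (h : μ.restrict U = ν.restrict U) (huniv : μ Set.univ = ν Set.univ) :
    μ.real Uᶜ = ν.real Uᶜ := by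
  have : IsFiniteMeasure ν := ⟨huniv ▸ measure_lt_top μ Set.univ⟩
  rw [measureReal_compl hU, measureReal_compl hU, measureReal_def, measureReal_def, measureReal_def,
    measureReal_def, huniv, measure_eq_of_restrict_eq_of_subset h subset_rfl]

theorem abs_measureReal_sub_le_of_restrict_eq [IsFiniteMeasure μ]
    (hU : MeasurableSet U) (h : μ.restrict U = ν.restrict U) (huniv : μ Set.univ = ν Set.univ) :
    |μ.real s - ν.real s| ≤ μ.real Uᶜ := by
  have : IsFiniteMeasure ν := ⟨huniv ▸ measure_lt_top μ Set.univ⟩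
  have h_inter : μ.real (s ∩ U) = ν.real (s ∩ U) :=
    congrArg ENNReal.toReal (measure_eq_of_restrict_eq_of_subset h Set.inter_subset_right)
  have hμ : μ.real (s \ U) ≤ μ.real Uᶜ := measureReal_mono fun _ hx => hx.2
  have hν : ν.real (s \ U) ≤ μ.real Uᶜ :=
    measureReal_compl_eq_of_restrict_eq hU h huniv ▸ measureReal_mono fun _ hx => hx.2
  rw [← measureReal_inter_add_sdiff (μ := μ) hU, ← measureReal_inter_add_sdiff (μ := ν) hU,
    h_inter, add_sub_add_left_eq_sub]
  exact abs_sub_le_of_nonneg_of_le measureReal_nonneg hμ measureReal_nonneg hν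

end RestrictEq

theorem wassersteinDist_le_of_restrict_Ioo_eq {μ ν : Measure ℝ} [IsFiniteMeasure μ] {K : ℝ}
    (h : μ.restrict (Set.Ioo (-K) K) = ν.restrict (Set.Ioo (-K) K))
    (huniv : μ Set.univ = ν Set.univ) :
    wassersteinDist μ ν ≤ μ.real (Set.Ioo (-K) K)ᶜ * (1 - tanh (K / 2)) := by
  have h_below : Set.EqOn (fun t => |absDdist μ t - absDdist ν t|) 0
      (Set.Ioo 0 (tanh (K / 2))) := by
    intro t ht
    have h_eq : absDdist μ t = absDdist ν t := congrArg ENNReal.toReal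
      (measure_eq_of_restrict_eq_of_subset h (setOf_abs_tanh_half_le_subset_Ioo ht.2))
    simp only [h_eq, sub_self, abs_zero, Pi.zero_apply]
  have h_bound (t : ℝ) : ‖|absDdist μ t - absDdist ν t|‖ ≤ μ.real (Set.Ioo (-K) K)ᶜ := by
    rw [norm_eq_abs, abs_abs]
    exact abs_measureReal_sub_le_of_restrict_eq measurableSet_Ioo h huniv
  exact (le_norm_self _).trans <| norm_intervalIntegral_le_of_eqOn_zero zero_le_one
    (tanh_lt_one _).le h_below fun t _ => h_bound t

theorem setOf_le_abs_eq_compl_Ioo {G : Type*} [AddCommGroup G] [LinearOrder G]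
    [IsOrderedAddMonoid G] (a : G) : {x : G | a ≤ |x|} = (Set.Ioo (-a) a)ᶜ := by
  ext x
  rw [Set.mem_compl_iff, Set.mem_Ioo, ← abs_lt, not_lt, Set.mem_ofPred_eq]

section SymSat

variable (μ : Measure ℝ) (K : ℝ)

theorem symSat_restrict_Ioo :
    (symSat μ K).restrict (Set.Ioo (-K) K) = μ.restrict (Set.Ioo (-K) K) := by
  simp [symSat, Measure.restrict_add, Measure.restrict_smul, restrict_dirac]

theorem symSat_univ : symSat μ K Set.univ = μ Set.univ := by
  have hp_nonneg : 0 ≤ exp (-K) / (1 + exp (-K)) := by positivity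
  have hp_le_one : exp (-K) / (1 + exp (-K)) ≤ 1 :=
    div_le_one_of_le₀ (by linarith) (by positivity)
  simp only [symSat, Measure.add_apply, Measure.smul_apply, smul_eq_mul, measure_univ, mul_one,
    Measure.restrict_apply_univ]
  rw [add_assoc, ← mul_add, ← ENNReal.ofReal_add hp_nonneg (sub_nonneg.mpr hp_le_one),
    add_sub_cancel, ENNReal.ofReal_one, mul_one, setOf_le_abs_eq_compl_Ioo,
    measure_add_measure_compl measurableSet_Ioo]

end SymSat

theorem wasserstein_symSat_le_general (μ : Measure ℝ) [IsFiniteMeasure μ] (K : ℝ) :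
    wassersteinDist μ (symSat μ K) ≤ μ.real {x : ℝ | K ≤ |x|} * (1 - tanh (K / 2)) := by
  rw [setOf_le_abs_eq_compl_Ioo]
  exact wassersteinDist_le_of_restrict_Ioo_eq (symSat_restrict_Ioo μ K).symm (symSat_univ μ K).symm

/-- The Wasserstein distance between a symmetric probability measure and its symmetric
saturation is at most `1 - tanh(K/2)`. -/
theorem wasserstein_symSat_le (μ : Measure ℝ) [IsProbabilityMeasure μ]
    (hsym : IsSymmetricMeasure μ) (K : ℝ) (hK : 0 < K) :
    wassersteinDist μ (symSat μ K) ≤ 1 - Real.tanh (K / 2) :=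
  (wasserstein_symSat_le_general μ K).trans <|
    mul_le_of_le_one_left (sub_nonneg.mpr (tanh_lt_one _).le) measureReal_le_one
end

section
/- Let a and b be probability measures on ℝ (not necessarily symmetric) and let a ⊞ b be the pushforward of the product measure a × b under the check-node combination map f(x,y) = 2·artanh(tanh(x/2)·tanh(y/2)). Then the Battacharyya parameters satisfy B(a ⊞ b) ≤ B(a) + B(b). -/
open MeasureTheory Real

/-- The inverse hyperbolic tangent, `artanh x = (1/2)·log((1+x)/(1-x))`. -/
noncomputable def artanh (x : ℝ) : ℝ := (1 / 2) * Real.log ((1 + x) / (1 - x))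

/-- The Battacharyya parameter of a probability measure on ℝ:
`B(μ) = ∫ e^{-x/2} dμ(x)`, a value in `[0, ∞]`. -/
noncomputable def battacharyya (μ : Measure ℝ) : ENNReal :=
  ∫⁻ x, ENNReal.ofReal (Real.exp (-x / 2)) ∂μ

/-- The belief-propagation check-node combination of two LLRs. -/
noncomputable def checkNodeMap (p : ℝ × ℝ) : ℝ :=
  2 * _root_.artanh (Real.tanh (p.1 / 2) * Real.tanh (p.2 / 2))

/-- The check-node convolution `a ⊞ b` of two measures on ℝ: the pushforward of
`a × b` under the check-node combination map. -/
noncomputable def checkConv (a b : Measure ℝ) : Measure ℝ :=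
  (a.prod b).map checkNodeMap

/-! In closed form, `e^{f(x,y)} = cosh ((x + y) / 2) / cosh ((x - y) / 2)`. Bounding
`cosh ((x + y) / 2)` below by `e^{(x + y) / 2} / 2` gives `e^{-f(x,y)} ≤ e^{-x} + e^{-y}`, and by
subadditivity of the square root `e^{-f(x,y)/2} ≤ e^{-x/2} + e^{-y/2}`. This pointwise
bound is then integrated against the product measure. -/

theorem one_add_tanh_mul_tanh (u v : ℝ) :
    1 + tanh u * tanh v = cosh (u + v) / (cosh u * cosh v) := by
  rw [tanh_eq_sinh_div_cosh, tanh_eq_sinh_div_cosh, cosh_add]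
  field_simp

theorem one_sub_tanh_mul_tanh (u v : ℝ) :
    1 - tanh u * tanh v = cosh (u - v) / (cosh u * cosh v) := by
  simpa only [tanh_neg, cosh_neg, mul_neg, ← sub_eq_add_neg] using one_add_tanh_mul_tanh u (-v)

theorem checkNodeMap_eq_log (p : ℝ × ℝ) :
    checkNodeMap p = log (cosh ((p.1 + p.2) / 2) / cosh ((p.1 - p.2) / 2)) := by
  rw [checkNodeMap, _root_.artanh, one_add_tanh_mul_tanh, one_sub_tanh_mul_tanh, ← add_div,
    ← sub_div, div_div_div_cancel_right₀ (by positivity)]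
  ring

theorem measurable_checkNodeMap : Measurable checkNodeMap := by
  rw [funext checkNodeMap_eq_log]
  fun_prop

theorem exp_neg_checkNodeMap (p : ℝ × ℝ) :
    exp (-checkNodeMap p) = cosh ((p.1 - p.2) / 2) / cosh ((p.1 + p.2) / 2) := by
  rw [checkNodeMap_eq_log, exp_neg, exp_log (by positivity), inv_div]

theorem cosh_sub_div_cosh_add_le (u v : ℝ) :
    cosh (u - v) / cosh (u + v) ≤ exp (-(2 * u)) + exp (-(2 * v)) := by
  have half_exp_le_cosh : exp (u + v) / 2 ≤ cosh (u + v) := by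
    rw [cosh_eq]
    gcongr
    exact le_add_of_nonneg_right (exp_nonneg _)
  calc cosh (u - v) / cosh (u + v)
      ≤ cosh (u - v) / (exp (u + v) / 2) := by gcongr
    _ = exp (u - v) / exp (u + v) + exp (-(u - v)) / exp (u + v) := by rw [cosh_eq]; ring
    _ = exp (-(2 * u)) + exp (-(2 * v)) := by
      rw [← exp_sub, ← exp_sub, add_comm]
      ring_nf

theorem exp_neg_checkNodeMap_le (p : ℝ × ℝ) :
    exp (-checkNodeMap p) ≤ exp (-p.1) + exp (-p.2) := by
  have bound := cosh_sub_div_cosh_add_le (p.1 / 2) (p.2 / 2)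
  rwa [← sub_div, ← add_div, ← exp_neg_checkNodeMap, mul_div_cancel₀ _ two_ne_zero,
    mul_div_cancel₀ _ two_ne_zero] at bound

theorem exp_neg_checkNodeMap_div_two_le (p : ℝ × ℝ) :
    exp (-checkNodeMap p / 2) ≤ exp (-p.1 / 2) + exp (-p.2 / 2) := by
  simp only [exp_half, sqrt_eq_rpow]
  calc exp (-checkNodeMap p) ^ (1 / 2 : ℝ)
      ≤ (exp (-p.1) + exp (-p.2)) ^ (1 / 2 : ℝ) := by gcongr; exact exp_neg_checkNodeMap_le p
    _ ≤ exp (-p.1) ^ (1 / 2 : ℝ) + exp (-p.2) ^ (1 / 2 : ℝ) :=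
      rpow_add_le_add_rpow (exp_nonneg _) (exp_nonneg _) (by norm_num) (by norm_num)

theorem battacharyya_smul (c : ENNReal) (μ : Measure ℝ) :
    battacharyya (c • μ) = c * battacharyya μ :=
  lintegral_smul_measure _ _

theorem battacharyya_map {α : Type*} [MeasurableSpace α] {g : α → ℝ} (hg : Measurable g)
    (μ : Measure α) :
    battacharyya (μ.map g) = ∫⁻ x, ENNReal.ofReal (exp (-g x / 2)) ∂μ :=
  lintegral_map (by fun_prop) hg

theorem battacharyya_checkConv_le_general (a b : Measure ℝ) [SFinite b] :
    battacharyya (checkConv a b) ≤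
      b Set.univ * battacharyya a + a Set.univ * battacharyya b := by
  calc battacharyya (checkConv a b)
      = ∫⁻ p, ENNReal.ofReal (exp (-checkNodeMap p / 2)) ∂a.prod b :=
        battacharyya_map measurable_checkNodeMap _
    _ ≤ ∫⁻ p, (ENNReal.ofReal (exp (-p.1 / 2)) + ENNReal.ofReal (exp (-p.2 / 2))) ∂a.prod b := by
        gcongr with p
        rw [← ENNReal.ofReal_add (exp_nonneg _) (exp_nonneg _)]
        exact ENNReal.ofReal_le_ofReal (exp_neg_checkNodeMap_div_two_le p)
    _ = battacharyya ((a.prod b).map Prod.fst) + battacharyya ((a.prod b).map Prod.snd) := by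
        rw [lintegral_add_left (by fun_prop), battacharyya_map measurable_fst,
          battacharyya_map measurable_snd]
    _ = b Set.univ * battacharyya a + a Set.univ * battacharyya b := by
        rw [Measure.map_fst_prod, Measure.map_snd_prod, battacharyya_smul, battacharyya_smul]

/-- For any (not necessarily symmetric) probability measures `a`, `b` on ℝ,
`B(a ⊞ b) ≤ B(a) + B(b)`. -/
theorem battacharyya_checkConv_le (a b : Measure ℝ)
    [IsProbabilityMeasure a] [IsProbabilityMeasure b] :
    battacharyya (checkConv a b) ≤ battacharyya a + battacharyya b := by
  simpa only [measure_univ, one_mul] using battacharyya_checkConv_le_general a b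
end

section
/- Let d ≥ 1 and let K₁,…,K_d > 0. Define K' = 2·artanh(∏_{i=1}^d tanh(K_i/2)), the output magnitude of a belief-propagation check node with incoming message magnitudes K₁,…,K_d. Then K' ≤ min_i K_i and e^{−K'} ≤ ∑_{i=1}^d e^{−K_i}. -/
open Real Finset

/-!
Let `P = ∏ᵢ tanh (Kᵢ / 2)` and let `K'` be the output message, so that
`e^{-K'} = (1 - P) / (1 + P)` and likewise `e^{-Kᵢ} = (1 - xᵢ) / (1 + xᵢ)` with
`xᵢ = tanh (Kᵢ / 2)`. For two messages,
`(1 - x) / (1 + x) + (1 - y) / (1 + y) = 2 (1 - xy) / ((1 + x) (1 + y)) ≥ (1 - xy) / (1 + xy)`,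
because `2 (1 + xy) - (1 + x) (1 + y) = (1 - x) (1 - y) ≥ 0`. This holds for messages of either
sign, so it can be iterated. The other bound holds because each further factor shrinks `|P|`, while
`artanh` is odd and increasing.
-/

section Products

variable {ι R : Type*} [Field R] [LinearOrder R] [IsStrictOrderedRing R]

lemma abs_prod_le_abs_of_mem {s : Finset ι} {x : ι → R} (hx : ∀ i ∈ s, |x i| ≤ 1) {j : ι}
    (hj : j ∈ s) : |∏ i ∈ s, x i| ≤ |x j| := by
  classical
  rw [abs_prod, ← mul_prod_erase s _ hj]
  exact mul_le_of_le_one_right (abs_nonneg _) <|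
    prod_le_one (fun i _ ↦ abs_nonneg _) fun i hi ↦ hx i (mem_of_mem_erase hi)

lemma abs_prod_lt_one {s : Finset ι} (hs : s.Nonempty) {x : ι → R} (hx : ∀ i ∈ s, |x i| < 1) :
    |∏ i ∈ s, x i| < 1 :=
  let ⟨j, hj⟩ := hs
  (abs_prod_le_abs_of_mem (fun i hi ↦ (hx i hi).le) hj).trans_lt (hx j hj)

lemma one_sub_mul_div_one_add_mul_le {x y : R} (hx : |x| < 1) (hy : |y| < 1) :
    (1 - x * y) / (1 + x * y) ≤ (1 - x) / (1 + x) + (1 - y) / (1 + y) := by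
  have hxy : |x * y| < 1 := by
    rw [abs_mul]
    exact mul_lt_one_of_nonneg_of_lt_one_left (abs_nonneg x) hx hy.le
  rw [abs_lt] at hx hy hxy
  have hx_pos : 0 < 1 + x := by linarith
  have hy_pos : 0 < 1 + y := by linarith
  have h_den : (1 + x) * (1 + y) ≤ 2 * (1 + x * y) := by
    linarith [mul_nonneg (sub_nonneg.2 hx.2.le) (sub_nonneg.2 hy.2.le)]
  calc (1 - x * y) / (1 + x * y)
      = 2 * (1 - x * y) / (2 * (1 + x * y)) := (mul_div_mul_left _ _ two_ne_zero).symm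
    _ ≤ 2 * (1 - x * y) / ((1 + x) * (1 + y)) :=
        div_le_div_of_nonneg_left (by linarith) (mul_pos hx_pos hy_pos) h_den
    _ = (1 - x) / (1 + x) + (1 - y) / (1 + y) := by
        field_simp
        ring

lemma one_sub_prod_div_one_add_prod_le_sum {s : Finset ι} (hs : s.Nonempty) {x : ι → R}
    (hx : ∀ i ∈ s, |x i| < 1) :
    (1 - ∏ i ∈ s, x i) / (1 + ∏ i ∈ s, x i) ≤ ∑ i ∈ s, (1 - x i) / (1 + x i) := by
  induction hs using Finset.Nonempty.cons_induction with
  | singleton j => simp only [prod_singleton, sum_singleton, le_refl]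
  | cons j s hj hs ih =>
    rw [forall_mem_cons] at hx
    rw [prod_cons, sum_cons]
    calc (1 - x j * ∏ i ∈ s, x i) / (1 + x j * ∏ i ∈ s, x i)
        ≤ (1 - x j) / (1 + x j) + (1 - ∏ i ∈ s, x i) / (1 + ∏ i ∈ s, x i) :=
          one_sub_mul_div_one_add_mul_le hx.1 (abs_prod_lt_one hs hx.2)
      _ ≤ (1 - x j) / (1 + x j) + ∑ i ∈ s, (1 - x i) / (1 + x i) := by
          gcongr
          exact ih hx.2

end Products

section Artanh

lemma artanh_eq_real_artanh {x : ℝ} (hx : |x| ≤ 1) : _root_.artanh x = Real.artanh x :=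
  (Real.artanh_eq_half_log (Set.mem_Icc.2 (abs_le.1 hx))).symm

lemma artanh_tanh_eq_self (u : ℝ) : _root_.artanh (tanh u) = u := by
  rw [artanh_eq_real_artanh (abs_tanh_lt_one u).le, Real.artanh_tanh]

lemma exp_neg_two_mul_artanh {x : ℝ} (hx : |x| < 1) :
    exp (-(2 * _root_.artanh x)) = (1 - x) / (1 + x) := by
  have h_pos : 0 < (1 + x) / (1 - x) := by
    rw [abs_lt] at hx
    exact div_pos (by linarith) (by linarith)
  rw [_root_.artanh, ← mul_assoc, mul_one_div_cancel two_ne_zero, one_mul, exp_neg,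
    exp_log h_pos, inv_div]

lemma one_sub_tanh_half_div_one_add_tanh_half (k : ℝ) :
    (1 - tanh (k / 2)) / (1 + tanh (k / 2)) = exp (-k) := by
  rw [← exp_neg_two_mul_artanh (abs_tanh_lt_one _), artanh_tanh_eq_self,
    mul_div_cancel₀ k two_ne_zero]

lemma abs_tanh_eq_tanh_abs (u : ℝ) : |tanh u| = tanh |u| := by
  rw [tanh_eq_sinh_div_cosh, abs_div, abs_sinh, abs_of_pos (cosh_pos u), ← cosh_abs,
    ← tanh_eq_sinh_div_cosh]

lemma abs_artanh_le_of_abs_le_abs_tanh {x u : ℝ} (h : |x| ≤ |tanh u|) :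
    |_root_.artanh x| ≤ |u| := by
  have hx : |x| < 1 := h.trans_lt (abs_tanh_lt_one u)
  rw [abs_tanh_eq_tanh_abs, abs_le, ← tanh_neg] at h
  rw [artanh_eq_real_artanh hx.le, abs_le]
  rw [abs_lt] at hx
  constructor
  · simpa only [Real.artanh_tanh] using Real.artanh_le_artanh (neg_one_lt_tanh _) hx.2 h.1
  · simpa only [Real.artanh_tanh] using Real.artanh_le_artanh hx.1 (tanh_lt_one _) h.2

end Artanh

section CheckNode

variable {ι : Type*} {s : Finset ι}

/-- The belief-propagation message `2 artanh (∏ i ∈ s, tanh (K i / 2))` sent by a check node whose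
incoming messages are `K i` for `i ∈ s`. The messages are log-likelihood ratios of either sign. For
`s = ∅` the message should be infinite, but the value here is `0`. -/
noncomputable def checkNodeMessage (s : Finset ι) (K : ι → ℝ) : ℝ :=
  2 * _root_.artanh (∏ i ∈ s, tanh (K i / 2))

lemma abs_checkNodeMessage_le (K : ι → ℝ) {j : ι} (hj : j ∈ s) :
    |checkNodeMessage s K| ≤ |K j| := by
  have h_prod : |∏ i ∈ s, tanh (K i / 2)| ≤ |tanh (K j / 2)| :=
    abs_prod_le_abs_of_mem (fun i _ ↦ (abs_tanh_lt_one (K i / 2)).le) hj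
  calc |checkNodeMessage s K| = 2 * |_root_.artanh (∏ i ∈ s, tanh (K i / 2))| := by
        rw [checkNodeMessage, abs_mul, abs_two]
    _ ≤ 2 * |K j / 2| :=
        mul_le_mul_of_nonneg_left (abs_artanh_le_of_abs_le_abs_tanh h_prod) zero_le_two
    _ = |K j| := by rw [abs_div, abs_two, mul_div_cancel₀ _ two_ne_zero]

lemma exp_neg_checkNodeMessage_le_sum (hs : s.Nonempty) (K : ι → ℝ) :
    exp (-checkNodeMessage s K) ≤ ∑ i ∈ s, exp (-K i) := by
  have h_lt (i : ι) (_ : i ∈ s) : |tanh (K i / 2)| < 1 := abs_tanh_lt_one _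
  simpa only [checkNodeMessage, exp_neg_two_mul_artanh (abs_prod_lt_one hs h_lt),
    one_sub_tanh_half_div_one_add_tanh_half] using one_sub_prod_div_one_add_prod_le_sum hs h_lt

theorem checknode_magnitude_general_general (hs : s.Nonempty) (K : ι → ℝ) :
    (∀ i ∈ s, |checkNodeMessage s K| ≤ |K i|) ∧
      exp (-checkNodeMessage s K) ≤ ∑ i ∈ s, exp (-K i) :=
  ⟨fun _ ↦ abs_checkNodeMessage_le K, exp_neg_checkNodeMessage_le_sum hs K⟩

end CheckNode

/-- For positive incoming magnitudes `K₁,…,K_d`, the check-node output magnitude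
`K' = 2·artanh(∏ᵢ tanh(Kᵢ/2))` satisfies `K' ≤ min_i K_i` and
`e^{-K'} ≤ ∑ᵢ e^{-K_i}`. -/
theorem checknode_magnitude_general (d : ℕ) (hd : 1 ≤ d) (K : Fin d → ℝ)
    (hK : ∀ i, 0 < K i) :
    (∀ i, 2 * _root_.artanh (∏ i, Real.tanh (K i / 2)) ≤ K i) ∧
      Real.exp (-(2 * _root_.artanh (∏ i, Real.tanh (K i / 2))))
        ≤ ∑ i, Real.exp (-(K i)) := by
  obtain ⟨h_abs, h_exp⟩ := checknode_magnitude_general_general ⟨⟨0, hd⟩, mem_univ _⟩ K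
  exact ⟨fun i ↦ (le_of_abs_le (h_abs i (mem_univ i))).trans_eq (abs_of_pos (hK i)), h_exp⟩
end
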